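/- (Lemma A.6: concentration of the empirical RKHS standard deviation.) Let 𝒳 be a measurable additive group, H a real separable Hilbert space, and φ : 𝒳 → H a bounded measurable feature map; let g(x,y) := ⟨φ(x), φ(y)⟩ be translation invariant with range g̃ := sup g − inf g. Let ν be a probability measure on 𝒳 with KME μ_ν and RKHS variance 𝒱* := E_{X∼ν}[‖φ(X) − μ_ν‖²]. Let X_1,…,X_n be i.i.d. with law ν, n ≥ 2, and define 𝒱̂ := (1/(n−1)) Σ_{t=1}^n ( g(X_t,X_t) − (1/n)Σ_{s=1}^n g(X_t,X_s) ). Then for each b ∈ {−1, +1} and every δ ∈ (0,1], with probability at least 1 − δ, b·(√𝒱̂ − √𝒱*) ≤ 2·√(2·g̃·log(1/δ)/n). -/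

import Mathlib

open MeasureTheory ProbabilityTheory Finset

noncomputable section

/-- The kernel `g(x,y) = ⟪φ x, φ y⟫` associated with the feature map `φ`. -/
def kerG {𝒳 H : Type*} [NormedAddCommGroup H] [InnerProductSpace ℝ H]
    (φ : 𝒳 → H) (x y : 𝒳) : ℝ :=
  inner ℝ (φ x) (φ y)

/-- The range `g̃ = sup_{x,y} g(x,y) − inf_{x,y} g(x,y)` of the kernel. -/
def kerRange {𝒳 H : Type*} [NormedAddCommGroup H] [InnerProductSpace ℝ H]
    (φ : 𝒳 → H) : ℝ :=
  (⨆ p : 𝒳 × 𝒳, kerG φ p.1 p.2) - (⨅ p : 𝒳 × 𝒳, kerG φ p.1 p.2)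

/-- The kernel mean embedding `μ_ν = E_{X∼ν}[φ(X)]` (a Bochner integral). -/
def KME {𝒳 H : Type*} [MeasurableSpace 𝒳] [NormedAddCommGroup H] [InnerProductSpace ℝ H]
    (φ : 𝒳 → H) (ν : Measure 𝒳) : H :=
  ∫ x, φ x ∂ν

/-- The empirical kernel mean embedding `μ̂ = (1/n) Σ_{t<n} φ(x_t)`. -/
def empKME {𝒳 H : Type*} [NormedAddCommGroup H] [InnerProductSpace ℝ H]
    (φ : 𝒳 → H) (n : ℕ) (x : ℕ → 𝒳) : H :=
  (n : ℝ)⁻¹ • ∑ t ∈ range n, φ (x t)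

/-- The empirical RKHS variance
`𝒱̂ = (1/(n−1)) Σ_{t<n} (g(x_t,x_t) − (1/n) Σ_{s<n} g(x_t,x_s))`. -/
def empVar {𝒳 H : Type*} [NormedAddCommGroup H] [InnerProductSpace ℝ H]
    (φ : 𝒳 → H) (n : ℕ) (x : ℕ → 𝒳) : ℝ :=
  ((n : ℝ) - 1)⁻¹ * ∑ t ∈ range n,
    (kerG φ (x t) (x t) - (n : ℝ)⁻¹ * ∑ s ∈ range n, kerG φ (x t) (x s))

/-- The RKHS variance `𝒱*_ν = E_{X∼ν}[‖φ(X) − μ_ν‖²]`. -/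
def Vstar {𝒳 H : Type*} [MeasurableSpace 𝒳] [NormedAddCommGroup H] [InnerProductSpace ℝ H]
    (φ : 𝒳 → H) (ν : Measure 𝒳) : ℝ :=
  ∫ x, ‖φ x - KME φ ν‖ ^ 2 ∂ν


lemma core_tail {Ω : Type*} [MeasurableSpace Ω] (P : Measure Ω) [IsProbabilityMeasure P]
    (U : Ω → ℝ) (c v s : ℝ) (hc : 0 < c) (hv : 0 ≤ v) (hs : 0 < s)
    (hint : ∀ l : ℝ, Integrable (fun ω => Real.exp (l * U ω)) P)
    (hmgf : ∀ l : ℝ, mgf U P (c * l) ≤ Real.exp (c * (v * (Real.exp l - 1))))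
    (b : ℝ) (hb : b = 1 ∨ b = -1) :
    P.real {ω | s < b * (Real.sqrt (U ω) - Real.sqrt v)} ≤ Real.exp (-(c * s ^ 2)) := by
  obtain ⟨w, hw, rfl⟩ : ∃ w, 0 ≤ w ∧ v = w ^ 2 := ⟨√v, Real.sqrt_nonneg _, (Real.sq_sqrt hv).symm⟩
  rw [Real.sqrt_sq hw]
  have key : ∀ r : ℝ, 0 < r → 0 < w → 
      -(c * Real.log (r / w)) * r ^ 2 + c * (w ^ 2 * (Real.exp (Real.log (r / w)) - 1))
        ≤ -(c * (r - w) ^ 2) := by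
    intro r hr hw
    rw [Real.exp_log (by positivity)]
    have h1 := Real.one_sub_inv_le_log_of_pos (x := r / w) (by positivity)
    have h2 : r ^ 2 * (1 - (r / w)⁻¹) ≤ r ^ 2 * Real.log (r / w) := by gcongr
    have h3 : r ^ 2 * (1 - (r / w)⁻¹) = r ^ 2 - r * w := by field_simp
    have h4 : w ^ 2 * (r / w - 1) = r * w - w ^ 2 := by field_simp
    rw [h4]
    rw [h3] at h2
    nlinarith
  rcases hb with rfl | rfl
  · have hsub : {ω | s < 1 * (Real.sqrt (U ω) - w)} ⊆ {ω | (w + s) ^ 2 ≤ U ω} := by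
      intro ω h
      simp only [Set.mem_ofPred_eq] at h ⊢
      exact (Real.le_sqrt' (by positivity)).1 (by linarith)
    refine (measureReal_mono hsub).trans ?_
    rcases hw.eq_or_lt with h0 | h0
    · subst h0
      refine (measure_ge_le_exp_mul_mgf (t := c * 1) _ (by positivity) (hint _)).trans ?_
      calc _ ≤ Real.exp (-(c * 1) * (0 + s) ^ 2) * Real.exp (c * (0 ^ 2 * (Real.exp 1 - 1))) := by
            gcongr; exact hmgf 1
        _ = _ := by rw [← Real.exp_add]; congr 1; ring
    · have hl : 0 ≤ Real.log ((w + s) / w) := Real.log_nonneg (by rw [one_le_div h0]; linarith)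
      refine (measure_ge_le_exp_mul_mgf (t := c * Real.log ((w + s) / w)) _ (by positivity)
        (hint _)).trans ?_
      refine (mul_le_mul_of_nonneg_left (hmgf _) (Real.exp_pos _).le).trans ?_
      rw [← Real.exp_add]
      have := key (w + s) (by positivity) h0
      exact Real.exp_le_exp.2 (this.trans (by simp))
  · rcases le_or_gt w s with h | h
    · have : {ω | s < -1 * (Real.sqrt (U ω) - w)} = ∅ := by
        ext ω
        simp only [Set.mem_ofPred_eq, Set.mem_empty_iff_false, iff_false, not_lt]
        linarith [Real.sqrt_nonneg (U ω)]
      rw [this]; simp; positivity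
    have h0 : 0 < w := hs.trans h
    have hsub : {ω | s < -1 * (Real.sqrt (U ω) - w)} ⊆ {ω | U ω ≤ (w - s) ^ 2} := by
      intro ω h
      simp only [Set.mem_ofPred_eq] at h ⊢
      exact (Real.sqrt_le_left (by linarith)).1 (by linarith)
    refine (measureReal_mono hsub).trans ?_
    have hl : Real.log ((w - s) / w) ≤ 0 := 
      Real.log_nonpos (div_nonneg (by linarith) hw) (by rw [div_le_one h0]; linarith)
    refine (measure_le_le_exp_mul_mgf (t := c * Real.log ((w - s) / w)) _
      (mul_nonpos_of_nonneg_of_nonpos hc.le hl) (hint _)).trans ?_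
    refine (mul_le_mul_of_nonneg_left (hmgf _) (Real.exp_pos _).le).trans ?_
    rw [← Real.exp_add]
    have := key (w - s) (by linarith) h0
    exact Real.exp_le_exp.2 (this.trans (by ring_nf; rfl))

lemma exp_chord (l x : ℝ) (h0 : 0 ≤ x) (h1 : x ≤ 1) :
    Real.exp (l * x) ≤ 1 + x * (Real.exp l - 1) := by
  have := convexOn_exp.2 (Set.mem_univ 0) (Set.mem_univ l) (sub_nonneg.2 h1) h0 (by ring)
  simp only [smul_eq_mul, mul_zero, zero_add, Real.exp_zero] at this
  rw [mul_comm l]; linarith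

/-- averaging over permutations -/
lemma perm_avg (n : ℕ) (h : Fin n → Fin n → ℝ) (hd : ∀ i, h i i = 0) (i j : Fin n) (hij : i ≠ j) :
    ((n : ℝ) * (n - 1)) * ∑ σ : Equiv.Perm (Fin n), h (σ i) (σ j)
      = (Fintype.card (Equiv.Perm (Fin n))) * ∑ a, ∑ c, h a c := by
  have hA : ∀ a c : Fin n, a ≠ c →
      ∑ σ : Equiv.Perm (Fin n), h (σ a) (σ c) = ∑ σ : Equiv.Perm (Fin n), h (σ i) (σ j) := by
    intro a c hac
    have := (MulAction.is_two_pretransitive_iff (G := Equiv.Perm (Fin n)) (α := Fin n)).1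
      (Equiv.Perm.isMultiplyPretransitive (Fin n) 2) hij hac
    obtain ⟨τ, h1, h2⟩ := this
    simp only [Equiv.Perm.smul_def] at h1 h2
    rw [← Equiv.sum_comp (Equiv.mulRight τ) (fun σ => h (σ i) (σ j))]
    simp [h1, h2]
  have h1 : ∀ σ : Equiv.Perm (Fin n), ∑ a, ∑ c, h (σ a) (σ c) = ∑ a, ∑ c, h a c := by
    intro σ
    rw [Equiv.sum_comp σ (fun a => ∑ c, h a (σ c))]
    exact Finset.sum_congr rfl fun a _ => Equiv.sum_comp σ (fun c => h a c)
  have h2 : ∑ σ : Equiv.Perm (Fin n), ∑ a, ∑ c, h (σ a) (σ c)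
      = (Fintype.card (Equiv.Perm (Fin n))) * ∑ a, ∑ c, h a c := by
    simp only [h1, Finset.sum_const, Finset.card_univ, nsmul_eq_mul]
  rw [← h2, Finset.sum_comm]
  set A := ∑ σ : Equiv.Perm (Fin n), h (σ i) (σ j)
  have h3 : ∀ a : Fin n, ∑ σ : Equiv.Perm (Fin n), ∑ c, h (σ a) (σ c) = ((n : ℝ) - 1) * A := by
    intro a
    rw [Finset.sum_comm, ← Finset.add_sum_erase _ _ (Finset.mem_univ a)]
    rw [Finset.sum_congr rfl (g := fun _ => A) (fun c hc => hA a c (Finset.ne_of_mem_erase hc).symm)]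
    have : 1 ≤ n := by have := i.2; omega
    simp [hd, Nat.cast_sub this]
  simp only [h3]
  simp; ring

lemma mgf_pairs {Ω 𝒳 : Type*} [MeasurableSpace Ω] [MeasurableSpace 𝒳]
    (P : Measure Ω) [IsProbabilityMeasure P] (Y : ℕ → Ω → 𝒳) (hY : ∀ t, Measurable (Y t))
    (hind : iIndepFun Y P) (F : 𝒳 × 𝒳 → ℝ) (hF : Measurable F) (t B : ℝ)
    (hB : ∀ i j, i ≠ j → mgf (fun ω => F (Y i ω, Y j ω)) P t ≤ B) (m : ℕ) :
    mgf (fun ω => ∑ k ∈ range m, F (Y (2 * k) ω, Y (2 * k + 1) ω)) P t ≤ B ^ m := by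
  induction m with
  | zero => simp [mgf]
  | succ m ih =>
    have hdisj : Disjoint (range (2 * m)) ({2 * m, 2 * m + 1} : Finset ℕ) := by
      rw [Finset.disjoint_left]
      intro a ha
      simp only [Finset.mem_range, Finset.mem_insert, Finset.mem_singleton] at *
      omega
    have h1 := hind.indepFun_finset _ _ hdisj hY
    have h2 : IndepFun (fun ω => ∑ k ∈ range m, F (Y (2 * k) ω, Y (2 * k + 1) ω))
        (fun ω => F (Y (2 * m) ω, Y (2 * m + 1) ω)) P := by
      have h3 := h1.comp
        (φ := fun y : (range (2 * m)) → 𝒳 => ∑ k : Fin m,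
          F (y ⟨2 * k, by simp⟩, y ⟨2 * k + 1, by have := k.2; simp only [Finset.mem_range]; omega⟩))
        (ψ := fun y : ({2 * m, 2 * m + 1} : Finset ℕ) → 𝒳 =>
          F (y ⟨2 * m, by simp⟩, y ⟨2 * m + 1, by simp⟩))
        (by fun_prop) (by fun_prop)
      have h7 : (fun ω => ∑ k ∈ range m, F (Y (2 * k) ω, Y (2 * k + 1) ω))
          = fun ω => ∑ k : Fin m, F (Y (2 * k) ω, Y (2 * k + 1) ω) := by
        funext ω
        rw [← Fin.sum_univ_eq_sum_range (fun k => F (Y (2 * k) ω, Y (2 * k + 1) ω))]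
      rw [h7]
      exact h3
    simp only [Finset.sum_range_succ]
    have h4 := h2.mgf_add (t := t)
      (Measurable.aestronglyMeasurable (by fun_prop)) (Measurable.aestronglyMeasurable (by fun_prop))
    have h5 : ((fun ω => ∑ k ∈ range m, F (Y (2 * k) ω, Y (2 * k + 1) ω)) +
        (fun ω => F (Y (2 * m) ω, Y (2 * m + 1) ω))) = 
        fun ω => ∑ k ∈ range m, F (Y (2 * k) ω, Y (2 * k + 1) ω) + F (Y (2 * m) ω, Y (2 * m + 1) ω) := rfl
    rw [h5] at h4
    rw [h4, pow_succ]
    have h6 : 0 ≤ mgf (fun ω => ∑ k ∈ range m, F (Y (2 * k) ω, Y (2 * k + 1) ω)) P t := mgf_nonneg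
    exact mul_le_mul ih (hB _ _ (by omega)) mgf_nonneg (h6.trans ih)

section
variable {𝒳 H Ω : Type*} [MeasurableSpace 𝒳]
    [NormedAddCommGroup H] [InnerProductSpace ℝ H]

/-- the pair kernel -/
def pairF (φ : 𝒳 → H) (p : 𝒳 × 𝒳) : ℝ := ‖φ p.1 - φ p.2‖ ^ 2 / 2

lemma pairF_eq (φ : 𝒳 → H) (x y : 𝒳) :
    pairF φ (x, y) = (kerG φ x x + kerG φ y y) / 2 - kerG φ x y := by
  simp only [pairF, kerG, norm_sub_sq_real, real_inner_self_eq_norm_sq]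
  ring

lemma pairF_le (φ : 𝒳 → H) (hφbdd : ∃ C : ℝ, ∀ x : 𝒳, ‖φ x‖ ≤ C) (p : 𝒳 × 𝒳) :
    pairF φ p ≤ kerRange φ := by
  obtain ⟨C, hC⟩ := hφbdd
  have hb : ∀ p : 𝒳 × 𝒳, |kerG φ p.1 p.2| ≤ C * C := fun p =>
    (abs_real_inner_le_norm _ _).trans
      (mul_le_mul (hC _) (hC _) (norm_nonneg _) ((norm_nonneg _).trans (hC p.1)))
  have h1 : BddAbove (Set.range fun p : 𝒳 × 𝒳 => kerG φ p.1 p.2) :=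
    ⟨C * C, by rintro _ ⟨p, rfl⟩; exact (abs_le.1 (hb p)).2⟩
  have h2 : BddBelow (Set.range fun p : 𝒳 × 𝒳 => kerG φ p.1 p.2) :=
    ⟨-(C * C), by rintro _ ⟨p, rfl⟩; exact (abs_le.1 (hb p)).1⟩
  obtain ⟨x, y⟩ := p
  rw [pairF_eq, kerRange]
  have := le_ciSup h1 (x, x)
  have := le_ciSup h1 (y, y)
  have := ciInf_le h2 (x, y)
  simp only at *
  linarith

lemma empVar_eq (φ : 𝒳 → H) (n : ℕ) (hn : 2 ≤ n) (x : ℕ → 𝒳) :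
    (n : ℝ) * (n - 1) * empVar φ n x = ∑ i : Fin n, ∑ j : Fin n, pairF φ (x i, x j) := by
  rw [Fin.sum_univ_eq_sum_range (fun i => ∑ j : Fin n, pairF φ (x i, x j))]
  have h0 : ∀ i, ∑ j : Fin n, pairF φ (x i, x j) = ∑ j ∈ range n, pairF φ (x i, x j) :=
    fun i => Fin.sum_univ_eq_sum_range (fun j => pairF φ (x i, x j)) n
  simp only [h0]
  have h2 : (2 : ℝ) ≤ n := by exact_mod_cast hn
  have h3 : (n : ℝ) - 1 ≠ 0 := by linarith
  simp only [pairF_eq, empVar, Finset.sum_sub_distrib, ← Finset.sum_div, Finset.sum_add_distrib,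
    Finset.sum_const, Finset.card_range, nsmul_eq_mul, ← Finset.mul_sum]
  field_simp
  ring

lemma pairF_measurable [SecondCountableTopology H] [MeasurableSpace H] [BorelSpace H]
    (φ : 𝒳 → H) (hφ : Measurable φ) : Measurable (pairF φ) := by
  unfold pairF
  fun_prop

lemma pairF_mean [CompleteSpace H] [SecondCountableTopology H] [MeasurableSpace H] [BorelSpace H]
    [MeasurableSpace Ω] (P : Measure Ω) [IsProbabilityMeasure P]
    (φ : 𝒳 → H) (hφ : Measurable φ) (hφbdd : ∃ C : ℝ, ∀ x : 𝒳, ‖φ x‖ ≤ C)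
    (ν : Measure 𝒳) [IsProbabilityMeasure ν] (X Y : Ω → 𝒳) (hX : Measurable X) (hY : Measurable Y)
    (hXl : P.map X = ν) (hYl : P.map Y = ν) (hind : IndepFun X Y P) :
    ∫ ω, pairF φ (X ω, Y ω) ∂P = Vstar φ ν := by
  obtain ⟨C, hC⟩ := hφbdd
  have hint : Integrable φ ν :=
    Integrable.of_bound hφ.aestronglyMeasurable C (Filter.Eventually.of_forall hC)
  set f : 𝒳 → H := fun x => φ x - KME φ ν with hf
  have hfm : Measurable f := by fun_prop
  have hfi : Integrable f ν := hint.sub (integrable_const _)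
  have hf0 : ∫ x, f x ∂ν = 0 := by
    rw [integral_sub hint (integrable_const _)]
    simp [KME]
  have hfb : ∀ x, ‖f x‖ ≤ C + ‖KME φ ν‖ := fun x =>
    (norm_sub_le _ _).trans (by gcongr; exact hC x)
  have hbil := hind.integral_bilin_comp_comp (f := f) (g := f) hX.aemeasurable hY.aemeasurable
    (hXl ▸ hfi) (hYl ▸ hfi) (innerSL ℝ)
  have hz : ∫ ω, f (X ω) ∂P = 0 := by
    rw [← hf0, ← hXl, integral_map hX.aemeasurable hfm.aestronglyMeasurable]
  rw [hz] at hbil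
  have hbil : ∫ ω, inner ℝ (f (X ω)) (f (Y ω)) ∂P = 0 := by
    refine Eq.trans ?_ (hbil.trans (by simp))
    rfl
  have hq : ∀ Z : Ω → 𝒳, Measurable Z → P.map Z = ν → ∫ ω, ‖f (Z ω)‖ ^ 2 ∂P = Vstar φ ν := by
    intro Z hZ hZl
    rw [Vstar, ← hZl, integral_map hZ.aemeasurable (by rw [hZl]; fun_prop), hZl]
  have hqi : ∀ Z : Ω → 𝒳, Measurable Z → Integrable (fun ω => ‖f (Z ω)‖ ^ 2) P := by
    intro Z hZ
    refine Integrable.of_bound (Measurable.aestronglyMeasurable (by fun_prop)) ((C + ‖KME φ ν‖) ^ 2)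
      (Filter.Eventually.of_forall fun ω => ?_)
    rw [Real.norm_of_nonneg (by positivity)]
    gcongr
    exact hfb _
  have hii : Integrable (fun ω => inner ℝ (f (X ω)) (f (Y ω))) P := by
    refine Integrable.of_bound (Measurable.aestronglyMeasurable (by fun_prop)) ((C + ‖KME φ ν‖) * (C + ‖KME φ ν‖))
      (Filter.Eventually.of_forall fun ω => ?_)
    exact (norm_inner_le_norm _ _).trans (mul_le_mul (hfb _) (hfb _) (norm_nonneg _)
      ((norm_nonneg _).trans (hfb (X ω))))
  have hp : ∀ ω, pairF φ (X ω, Y ω)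
      = ‖f (X ω)‖ ^ 2 / 2 + ‖f (Y ω)‖ ^ 2 / 2 - inner ℝ (f (X ω)) (f (Y ω)) := by
    intro ω
    have : φ (X ω) - φ (Y ω) = f (X ω) - f (Y ω) := by simp [hf]
    simp only [pairF, this, norm_sub_sq_real]
    ring
  simp only [hp]
  have hadd : Integrable (fun ω => ‖f (X ω)‖ ^ 2 / 2 + ‖f (Y ω)‖ ^ 2 / 2) P :=
    ((hqi X hX).div_const 2).add ((hqi Y hY).div_const 2)
  rw [integral_sub hadd hii,
    integral_add ((hqi X hX).div_const 2) ((hqi Y hY).div_const 2), hbil, integral_div, integral_div,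
    hq X hX hXl, hq Y hY hYl]
  ring

end

/-- (Lemma A.6: concentration of the empirical RKHS standard deviation.) For i.i.d.
samples `X_1,…,X_n ∼ ν`, for each sign `b ∈ {−1, +1}` and every `δ ∈ (0,1]`, with
probability at least `1 − δ`, `b (√𝒱̂ − √𝒱*) ≤ 2 √(2 g̃ log(1/δ)/n)`. -/
theorem empirical_RKHS_stddev_concentration
    {𝒳 H Ω : Type*} [MeasurableSpace 𝒳] [AddCommGroup 𝒳]
    [NormedAddCommGroup H] [InnerProductSpace ℝ H] [CompleteSpace H]
    [SecondCountableTopology H] [MeasurableSpace H] [BorelSpace H] [MeasurableSpace Ω]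
    (P : Measure Ω) [IsProbabilityMeasure P]
    (φ : 𝒳 → H) (hφmeas : Measurable φ) (hφbdd : ∃ C : ℝ, ∀ x : 𝒳, ‖φ x‖ ≤ C)
    (hTI : ∃ Ψ : 𝒳 → ℝ, ∀ x y : 𝒳, kerG φ x y = Ψ (x - y))
    (ν : Measure 𝒳) [IsProbabilityMeasure ν]
    (n : ℕ) (hn : 2 ≤ n)
    (X : ℕ → Ω → 𝒳) (hXmeas : ∀ t, Measurable (X t))
    (hXlaw : ∀ t, Measure.map (X t) P = ν)
    (hXindep : iIndepFun X P)
    (b : ℝ) (hb : b = 1 ∨ b = -1)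
    (δ : ℝ) (hδ0 : 0 < δ) (hδ1 : δ ≤ 1) :
    ENNReal.ofReal (1 - δ) ≤
      P {ω | b * (Real.sqrt (empVar φ n (fun t => X t ω)) - Real.sqrt (Vstar φ ν))
          ≤ 2 * Real.sqrt (2 * kerRange φ * Real.log (1 / δ) / n)} := by
  have hFm := pairF_measurable φ hφmeas
  have hF0 : ∀ p, 0 ≤ pairF φ p := fun p => by unfold pairF; positivity
  have hFM := pairF_le φ hφbdd
  have hn2 : (2 : ℝ) ≤ n := by exact_mod_cast hn
  set M := kerRange φ with hM
  set U : Ω → ℝ := fun ω => empVar φ n (fun t => X t ω) with hU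
  set v := Vstar φ ν with hv
  have hv0 : 0 ≤ v := integral_nonneg fun x => by positivity
  have hUeq : ∀ ω, U ω = ((n : ℝ) * (n - 1))⁻¹ * ∑ i : Fin n, ∑ j : Fin n, pairF φ (X i ω, X j ω) := by
    intro ω
    have h := empVar_eq φ n hn (fun t => X t ω)
    rw [← h, inv_mul_cancel_left₀]
    exact mul_ne_zero (by linarith) (by linarith)
  have hUm : Measurable U := by
    rw [funext hUeq]
    fun_prop
  have hmean : ∀ i j, i ≠ j → ∫ ω, pairF φ (X i ω, X j ω) ∂P = v := fun i j hij =>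
    pairF_mean P φ hφmeas hφbdd ν _ _ (hXmeas i) (hXmeas j) (hXlaw i) (hXlaw j)
      (hXindep.indepFun hij)
  have hKpos : 0 ≤ ((n : ℝ) * (n - 1))⁻¹ := inv_nonneg.2 (mul_nonneg (by linarith) (by linarith))
  have hUb : ∀ ω, U ω ∈ Set.Icc 0 (((n : ℝ) * (n - 1))⁻¹ * ∑ i : Fin n, ∑ j : Fin n, M) := by
    intro ω
    rw [hUeq]
    constructor
    · exact mul_nonneg hKpos (Finset.sum_nonneg fun i _ => Finset.sum_nonneg fun j _ => hF0 _)
    · exact mul_le_mul_of_nonneg_left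
        (Finset.sum_le_sum fun i _ => Finset.sum_le_sum fun j _ => hFM _) hKpos
  have hM0 : 0 ≤ M := (hF0 (0, 0)).trans (hFM (0, 0))
  set s := 2 * Real.sqrt (2 * M * Real.log (1 / δ) / n) with hs
  have hs0 : 0 ≤ s := by positivity
  have hms : MeasurableSet {ω | s < b * (Real.sqrt (U ω) - Real.sqrt v)} :=
    measurableSet_lt measurable_const (by fun_prop)
  have hfin : P.real {ω | s < b * (Real.sqrt (U ω) - Real.sqrt v)} ≤ δ →
      ENNReal.ofReal (1 - δ) ≤ P {ω | b * (Real.sqrt (U ω) - Real.sqrt v) ≤ s} := by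
    intro h
    have hc : {ω | b * (Real.sqrt (U ω) - Real.sqrt v) ≤ s}
        = {ω | s < b * (Real.sqrt (U ω) - Real.sqrt v)}ᶜ := by
      ext ω; simp
    rw [hc]
    refine ENNReal.ofReal_le_of_le_toReal ?_
    change _ ≤ P.real _
    rw [probReal_compl_eq_one_sub hms]
    linarith
  apply hfin
  rcases hδ1.eq_or_lt with rfl | hδ1
  · exact measureReal_le_one
  have hL : 0 < Real.log (1 / δ) := Real.log_pos (by rw [lt_div_iff₀ hδ0]; linarith)
  rcases hM0.eq_or_lt with hMz | hMpos
  · have hFz : ∀ p, pairF φ p = 0 := fun p => le_antisymm ((hFM p).trans hMz.ge) (hF0 p)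
    have hvz : v = 0 := by
      rw [← hmean 0 1 (by norm_num)]
      simp [hFz]
    have : {ω | s < b * (Real.sqrt (U ω) - Real.sqrt v)} = ∅ := by
      ext ω
      simp [hUeq, hFz, hvz, hs0]
    rw [this]
    simpa using hδ0.le
  have hspos : 0 < s := by positivity
  set m := n / 2 with hm
  have hm1 : 1 ≤ m := by omega
  have hmR : (0 : ℝ) < m := by exact_mod_cast hm1
  have hm4 : (n : ℝ) ≤ 4 * m := by
    have : n ≤ 4 * m := by omega
    exact_mod_cast this
  -- one-pair mgf
  have hone : ∀ l : ℝ, ∀ i j, i ≠ j → mgf (fun ω => pairF φ (X i ω, X j ω)) P (l / M)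
      ≤ Real.exp (v / M * (Real.exp l - 1)) := by
    intro l i j hij
    have hmm : Measurable fun ω => pairF φ (X i ω, X j ω) := by fun_prop
    have hFi : Integrable (fun ω => pairF φ (X i ω, X j ω)) P := by
      refine Integrable.of_bound hmm.aestronglyMeasurable M
        (Filter.Eventually.of_forall fun ω => ?_)
      rw [Real.norm_of_nonneg (hF0 _)]
      exact hFM _
    have h1 : mgf (fun ω => pairF φ (X i ω, X j ω)) P (l / M)
        ≤ ∫ ω, (1 + pairF φ (X i ω, X j ω) / M * (Real.exp l - 1)) ∂P := by
      refine integral_mono ?_ ?_ fun ω => ?_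
      · exact integrable_exp_mul_of_mem_Icc (a := 0) (b := M) hmm.aemeasurable
          (Filter.Eventually.of_forall fun ω => ⟨hF0 _, hFM _⟩)
      · exact (integrable_const _).add ((hFi.div_const _).mul_const _)
      · have := exp_chord l (pairF φ (X i ω, X j ω) / M) (div_nonneg (hF0 _) hM0)
          ((div_le_one hMpos).2 (hFM _))
        refine le_trans (le_of_eq ?_) this
        congr 1
        ring
    refine h1.trans ?_
    rw [integral_add (integrable_const _) ((hFi.div_const _).mul_const _), integral_mul_const,
      integral_div, hmean i j hij]
    simp only [integral_const, probReal_univ, smul_eq_mul, mul_one]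
    rw [add_comm]
    exact Real.add_one_le_exp _
  -- blocks attached to a permutation
  let e : Equiv.Perm (Fin n) → ℕ → ℕ := fun σ k => if h : k < n then (σ ⟨k, h⟩ : ℕ) else k
  have he : ∀ σ, Function.Injective (e σ) := by
    intro σ a c hac
    simp only [e] at hac
    split_ifs at hac with h1 h2 h2
    · have := σ.injective (Fin.ext hac)
      simpa using this
    · exact absurd (σ ⟨a, h1⟩).2 (by omega)
    · exact absurd (σ ⟨c, h2⟩).2 (by omega)
    · exact hac
  let W : Equiv.Perm (Fin n) → Ω → ℝ := fun σ ω =>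
    ∑ k ∈ range m, pairF φ (X (e σ (2 * k)) ω, X (e σ (2 * k + 1)) ω)
  have hWm : ∀ σ, Measurable (W σ) := fun σ => by
    simp only [W]
    fun_prop
  have hWmgf : ∀ l σ, mgf (W σ) P (l / M) ≤ Real.exp (v / M * (Real.exp l - 1)) ^ m := by
    intro l σ
    exact mgf_pairs P (fun t => X (e σ t)) (fun t => hXmeas _) (hXindep.precomp (he σ))
      (pairF φ) hFm _ _ (fun i j hij => hone l _ _ ((he σ).ne hij)) m
  have hWb : ∀ σ ω, W σ ω ∈ Set.Icc 0 (∑ k ∈ range m, M) := fun σ ω =>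
    ⟨Finset.sum_nonneg fun k _ => hF0 _, Finset.sum_le_sum fun k _ => hFM _⟩
  set N : ℝ := (Fintype.card (Equiv.Perm (Fin n)) : ℝ) with hN
  have hNpos : 0 < N := by
    rw [hN]; exact_mod_cast Fintype.card_pos
  have hUW : ∀ ω, m * U ω = ∑ σ, N⁻¹ * W σ ω := by
    intro ω
    have hk : ∀ k ∈ range m, ((n : ℝ) * (n - 1)) *
        ∑ σ : Equiv.Perm (Fin n), pairF φ (X (e σ (2 * k)) ω, X (e σ (2 * k + 1)) ω)
        = N * ∑ i : Fin n, ∑ j : Fin n, pairF φ (X i ω, X j ω) := by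
      intro k hk
      rw [Finset.mem_range] at hk
      have h1 : 2 * k < n := by omega
      have h2 : 2 * k + 1 < n := by omega
      have := perm_avg n (fun i j => pairF φ (X i ω, X j ω)) (fun i => by simp [pairF])
        ⟨2 * k, h1⟩ ⟨2 * k + 1, h2⟩ (by simp)
      simp only [e, h1, h2, dif_pos]
      exact this
    have hne : (n : ℝ) * (n - 1) ≠ 0 := mul_ne_zero (by linarith) (by linarith)
    have h3 : ((n : ℝ) * (n - 1)) * ∑ σ, W σ ω
        = m * (N * ∑ i : Fin n, ∑ j : Fin n, pairF φ (X i ω, X j ω)) := by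
      simp only [W]
      rw [Finset.sum_comm, Finset.mul_sum, Finset.sum_congr rfl hk]
      simp
    rw [hUeq, ← Finset.mul_sum]
    have h4 : ∑ σ, W σ ω = ((n : ℝ) * (n - 1))⁻¹ *
        (m * (N * ∑ i : Fin n, ∑ j : Fin n, pairF φ (X i ω, X j ω))) := by
      rw [← h3, inv_mul_cancel_left₀ hne]
    rw [h4]
    field_simp
  have hmgf : ∀ l : ℝ, mgf U P (m / M * l) ≤ Real.exp (m / M * (v * (Real.exp l - 1))) := by
    intro l
    have hpt : ∀ ω, Real.exp (m / M * l * U ω) ≤ ∑ σ, N⁻¹ * Real.exp (l / M * W σ ω) := by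
      intro ω
      have := convexOn_exp.map_sum_le (t := Finset.univ) (w := fun _ : Equiv.Perm (Fin n) => N⁻¹)
        (p := fun σ => l / M * W σ ω) (fun _ _ => by positivity)
        (by simp only [Finset.sum_const, Finset.card_univ, nsmul_eq_mul]
            exact mul_inv_cancel₀ hNpos.ne') (fun _ _ => Set.mem_univ _)
      simp only [smul_eq_mul] at this
      refine le_trans (le_of_eq ?_) this
      congr 1
      calc m / M * l * U ω = l / M * (m * U ω) := by ring
        _ = _ := by
          rw [hUW, Finset.mul_sum]
          exact Finset.sum_congr rfl fun σ _ => by ring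
    have hWi : ∀ σ, Integrable (fun ω => Real.exp (l / M * W σ ω)) P := fun σ =>
      integrable_exp_mul_of_mem_Icc (hWm σ).aemeasurable
        (Filter.Eventually.of_forall fun ω => hWb σ ω)
    have h1 : mgf U P (m / M * l) ≤ ∫ ω, ∑ σ, N⁻¹ * Real.exp (l / M * W σ ω) ∂P := by
      refine integral_mono ?_ ?_ hpt
      · exact integrable_exp_mul_of_mem_Icc hUm.aemeasurable (Filter.Eventually.of_forall hUb)
      · exact integrable_finsetSum _ fun σ _ => (hWi σ).const_mul _
    refine h1.trans ?_
    rw [integral_finsetSum _ fun σ _ => (hWi σ).const_mul _]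
    simp only [integral_const_mul]
    calc _ ≤ ∑ σ : Equiv.Perm (Fin n), N⁻¹ * Real.exp (v / M * (Real.exp l - 1)) ^ m := by
          gcongr with σ
          exact hWmgf l σ
      _ = Real.exp (v / M * (Real.exp l - 1)) ^ m := by
          simp only [Finset.sum_const, Finset.card_univ, nsmul_eq_mul]
          exact mul_inv_cancel_left₀ hNpos.ne' _
      _ = _ := by
          rw [← Real.exp_nat_mul]
          congr 1
          ring
  refine (core_tail P U (m / M) v s (by positivity) hv0 hspos (fun l => ?_) hmgf b hb).trans ?_
  · exact integrable_exp_mul_of_mem_Icc hUm.aemeasurable (Filter.Eventually.of_forall hUb)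
  · have h1 : s ^ 2 = 8 * M * Real.log (1 / δ) / n := by
      rw [hs, mul_pow, Real.sq_sqrt (by positivity)]
      ring
    have h2 : Real.log (1 / δ) ≤ m / M * s ^ 2 := by
      rw [h1]
      have : m / M * (8 * M * Real.log (1 / δ) / n) = (8 * m / n) * Real.log (1 / δ) := by
        field_simp
      rw [this]
      refine le_mul_of_one_le_left hL.le ?_
      rw [one_le_div (by linarith)]
      linarith
    calc Real.exp (-(m / M * s ^ 2)) ≤ Real.exp (-Real.log (1 / δ)) := by gcongr
      _ = δ := by
        rw [one_div, Real.log_inv, neg_neg, Real.exp_log hδ0]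

end
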